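/- There exists a 14-element MS-algebra A such that a quasi-identity in the language {∧, ∨, °, 0, 1} is admissible in the algebra MS (equivalently, admissible in the variety of MS-algebras) if and only if it is valid in A; moreover, for every finite set {B₁, …, B_k} of finite algebras in this language with the property that a quasi-identity is valid in all of B₁, …, B_k if and only if it is admissible in MS, one has [14] ≤_m [|B₁|, …, |B_k|] in the multiset ordering. -/

import Mathlib

/-!
The algebra is `MS14 = {⊥, ⊤} ∪ (MS × 2)`: the product of the six-element algebra `MS` with the
two-element Boolean algebra, to which a new bottom `⊥` and a new top `⊤` are adjoined, with
`⊥° = ⊤`, `⊤° = ⊥`. It is generated by `(a, 1)` and `(b, 1)`; `MS14.rep` writes every element as a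
term in these two generators.

For six pairs `(p, q)` of elements of `MS` (the relation `Good p q`), sending `(a, 1) ↦ p` and
`(b, 1) ↦ q` extends to a homomorphism `MS14 → MS` (`good_hom`). The homomorphisms for
`(a, b)`, `(d, d)`, `(1, 1)` separate points (`sep`), so `MS14` is a subalgebra of a power of `MS`,
and the first of them maps `MS14` onto `MS`. Hence an assignment into `MS` lifts to `MS14`, and a
quasi-identity valid in `MS14` is admissible in `MS`.

Conversely, `MS14` embeds into a free algebra: there are terms `genA`, `genB` in two variables whose
values in `MS` always form a good pair (`gen_good`), and all three separating pairs occur among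
these values. Substituting representing terms for elements of `MS14` therefore turns an assignment
into `MS14` that satisfies the premises into a substitution that unifies them in `MS`, so
admissible quasi-identities are valid in `MS14`.

For minimality, an endomorphism of `MS14` that distinguishes `(b, 1)` from `(d, 1) = (b, 1)°°` is
the identity (`endo_eq_id`). Suppose all `Bᵢ` have fewer than 14 elements. The quasi-identity
"diagram of `MS14` implies `(b, 1) ≈ (d, 1)`" fails in `MS14`, hence in some `Bᵢ`, which gives a
homomorphism `MS14 → Bᵢ` distinguishing `(b, 1)` from `(d, 1)` but, by cardinality, identifying two
elements `r ≠ s`. But "diagram of `MS14` and `r ≈ s` imply `(b, 1) ≈ (d, 1)`" is valid in `MS14`,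
hence admissible, hence valid in `Bᵢ`: a contradiction.
-/

/-- Terms in the language {∧, ∨, °, 0, 1} over a set `V` of variables. -/
inductive MSTerm (V : Type) : Type
  | var : V → MSTerm V
  | meet : MSTerm V → MSTerm V → MSTerm V
  | join : MSTerm V → MSTerm V → MSTerm V
  | star : MSTerm V → MSTerm V
  | zero : MSTerm V
  | one : MSTerm V

/-- An algebra in the language {∧, ∨, °, 0, 1}. -/
structure MSAlg where
  carrier : Type
  meet : carrier → carrier → carrier
  join : carrier → carrier → carrier
  star : carrier → carrier
  zero : carrier
  one : carrier

/-- Evaluation of a term in an algebra under an assignment of the variables. -/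
def MSTerm.eval {V : Type} (A : MSAlg) (v : V → A.carrier) : MSTerm V → A.carrier
  | .var x => v x
  | .meet t s => A.meet (t.eval A v) (s.eval A v)
  | .join t s => A.join (t.eval A v) (s.eval A v)
  | .star t => A.star (t.eval A v)
  | .zero => A.zero
  | .one => A.one

/-- Substitution of terms for variables. -/
def MSTerm.subst {V W : Type} (s : V → MSTerm W) : MSTerm V → MSTerm W
  | .var x => s x
  | .meet t u => .meet (t.subst s) (u.subst s)
  | .join t u => .join (t.subst s) (u.subst s)
  | .star t => .star (t.subst s)
  | .zero => .zero
  | .one => .one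

/-- Validity of the identity `φ ≈ ψ` in the algebra `A`. -/
def MSIdValid {V : Type} (A : MSAlg) (φ ψ : MSTerm V) : Prop :=
  ∀ v : V → A.carrier, φ.eval A v = ψ.eval A v

/-- Validity of the quasi-identity `Γ ⇒ φ ≈ ψ` in the algebra `A`. -/
def MSQValid (A : MSAlg) (Γ : List (MSTerm ℕ × MSTerm ℕ)) (φ ψ : MSTerm ℕ) : Prop :=
  ∀ v : ℕ → A.carrier,
    (∀ p ∈ Γ, p.1.eval A v = p.2.eval A v) → φ.eval A v = ψ.eval A v

/-- Admissibility of the quasi-identity `Γ ⇒ φ ≈ ψ` in the algebra `M`. -/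
def MSAdmissible (M : MSAlg) (Γ : List (MSTerm ℕ × MSTerm ℕ)) (φ ψ : MSTerm ℕ) : Prop :=
  ∀ s : ℕ → MSTerm ℕ,
    (∀ p ∈ Γ, MSIdValid M (p.1.subst s) (p.2.subst s)) →
    MSIdValid M (φ.subst s) (ψ.subst s)

/-- `A` is an MS-algebra: a bounded distributive lattice with a unary `°`
satisfying x ≤ x°°, (x ∧ y)° = x° ∨ y°, and 1° = 0. -/
def IsMSAlg (A : MSAlg) : Prop :=
  (∀ x y, A.meet x y = A.meet y x) ∧
  (∀ x y, A.join x y = A.join y x) ∧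
  (∀ x y z, A.meet (A.meet x y) z = A.meet x (A.meet y z)) ∧
  (∀ x y z, A.join (A.join x y) z = A.join x (A.join y z)) ∧
  (∀ x y, A.meet x (A.join x y) = x) ∧
  (∀ x y, A.join x (A.meet x y) = x) ∧
  (∀ x y z, A.meet x (A.join y z) = A.join (A.meet x y) (A.meet x z)) ∧
  (∀ x, A.join x A.zero = x) ∧
  (∀ x, A.meet x A.one = x) ∧
  (∀ x, A.meet x (A.star (A.star x)) = x) ∧
  (∀ x y, A.star (A.meet x y) = A.join (A.star x) (A.star y)) ∧
  A.star A.one = A.zero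

/-- The Dershowitz–Manna multiset ordering (induced by the usual order on `ℕ`). -/
def MultisetLE (N N' : Multiset ℕ) : Prop :=
  ∀ x : ℕ, N'.count x < N.count x → ∃ y : ℕ, x < y ∧ N.count y < N'.count y

/-- The six-element generating MS-algebra on {0, a, b, c, d, 1}:
0 < a, 0 < b, b < c, b < d, a < c, c < 1, d < 1. -/
inductive MS6 : Type
  | z  -- 0
  | a
  | b
  | c
  | d
  | u  -- 1
deriving DecidableEq

def MS6.meet : MS6 → MS6 → MS6
  | .z, _ => .z
  | _, .z => .z
  | .u, y => y
  | x, .u => x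
  | .a, .a => .a
  | .a, .b => .z
  | .a, .c => .a
  | .a, .d => .z
  | .b, .a => .z
  | .b, .b => .b
  | .b, .c => .b
  | .b, .d => .b
  | .c, .a => .a
  | .c, .b => .b
  | .c, .c => .c
  | .c, .d => .b
  | .d, .a => .z
  | .d, .b => .b
  | .d, .c => .b
  | .d, .d => .d

def MS6.join : MS6 → MS6 → MS6
  | .u, _ => .u
  | _, .u => .u
  | .z, y => y
  | x, .z => x
  | .a, .a => .a
  | .a, .b => .c
  | .a, .c => .c
  | .a, .d => .u
  | .b, .a => .c
  | .b, .b => .b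
  | .b, .c => .c
  | .b, .d => .d
  | .c, .a => .c
  | .c, .b => .c
  | .c, .c => .c
  | .c, .d => .u
  | .d, .a => .u
  | .d, .b => .d
  | .d, .c => .u
  | .d, .d => .d

/-- °0 = 1, °a = a, °b = d, °c = 0, °d = d, °1 = 0. -/
def MS6.star : MS6 → MS6
  | .z => .u
  | .a => .a
  | .b => .d
  | .c => .z
  | .d => .d
  | .u => .z

/-- The six-element MS-algebra generating the variety of MS-algebras. -/
def MS6alg : MSAlg := ⟨MS6, MS6.meet, MS6.join, MS6.star, MS6.z, MS6.u⟩

/-! ### Homomorphisms and substitutions -/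

/-- `h` is a homomorphism of algebras in the language {∧, ∨, °, 0, 1}. -/
structure MSIsHom (A B : MSAlg) (h : A.carrier → B.carrier) : Prop where
  map_meet : ∀ x y, h (A.meet x y) = B.meet (h x) (h y)
  map_join : ∀ x y, h (A.join x y) = B.join (h x) (h y)
  map_star : ∀ x, h (A.star x) = B.star (h x)
  map_zero : h A.zero = B.zero
  map_one : h A.one = B.one

theorem MSIsHom.map_eval {A B : MSAlg} {h : A.carrier → B.carrier} (hh : MSIsHom A B h)
    {V : Type} (v : V → A.carrier) (t : MSTerm V) :
    h (t.eval A v) = t.eval B (fun i => h (v i)) := by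
  induction t with
  | var x => rfl
  | meet t s iht ihs => simp only [MSTerm.eval, hh.map_meet, iht, ihs]
  | join t s iht ihs => simp only [MSTerm.eval, hh.map_join, iht, ihs]
  | star t ih => simp only [MSTerm.eval, hh.map_star, ih]
  | zero => exact hh.map_zero
  | one => exact hh.map_one

theorem MSTerm.eval_subst {V W : Type} (A : MSAlg) (s : V → MSTerm W) (v : W → A.carrier)
    (t : MSTerm V) : (t.subst s).eval A v = t.eval A (fun i => (s i).eval A v) := by
  induction t with
  | var x => rfl
  | meet t s iht ihs => simp only [MSTerm.subst, MSTerm.eval, iht, ihs]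
  | join t s iht ihs => simp only [MSTerm.subst, MSTerm.eval, iht, ihs]
  | star t ih => simp only [MSTerm.subst, MSTerm.eval, ih]
  | zero => rfl
  | one => rfl

/-! ### The fourteen-element algebra -/

/-- The set `{⊥, ⊤} ∪ (MS × 2)`; the Boolean `i` in `mid m i` is the coordinate in `2`. -/
inductive MS14 : Type
  | bot
  | top
  | mid (m : MS6) (i : Bool)
deriving DecidableEq

/-- A reducible copy of `MS6alg`, so that its carrier unifies with `MS6`. -/
abbrev MS6red : MSAlg := ⟨MS6, MS6.meet, MS6.join, MS6.star, MS6.z, MS6.u⟩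

namespace MS14

def meet : MS14 → MS14 → MS14
  | bot, _ => bot
  | _, bot => bot
  | top, y => y
  | x, top => x
  | mid m i, mid n j => mid (m.meet n) (i && j)

def join : MS14 → MS14 → MS14
  | top, _ => top
  | _, top => top
  | bot, y => y
  | x, bot => x
  | mid m i, mid n j => mid (m.join n) (i || j)

def star : MS14 → MS14
  | bot => top
  | top => bot
  | mid m i => mid m.star (!i)

/-- The product of `MS` with the two-element Boolean algebra, with a new bottom and a new top
interchanged by `°`. -/
abbrev alg : MSAlg := ⟨MS14, meet, join, star, bot, top⟩

/-- The fourteen elements. -/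
def elems : List MS14 :=
  bot :: top :: [MS6.z, .a, .b, .c, .d, .u].flatMap fun m => [mid m false, mid m true]

theorem mem_elems (x : MS14) : x ∈ elems := by
  rcases x with _ | _ | ⟨_ | _ | _ | _ | _ | _, _ | _⟩ <;> decide

instance : Fintype MS14 := ⟨elems.toFinset, fun x => List.mem_toFinset.2 (mem_elems x)⟩

/-- A term representing each element; variable `0` stands for `(a, 1)`, variable `1` for
`(b, 1)`. -/
def rep : MS14 → MSTerm ℕ
  | bot => .zero
  | top => .one
  | mid .z true => .meet (.var 0) (.var 1)
  | mid .a true => .var 0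
  | mid .b true => .var 1
  | mid .c true => .join (.var 0) (.var 1)
  | mid .d true => .star (.star (.var 1))
  | mid .u true => .join (.var 0) (.star (.star (.var 1)))
  | mid .z false => .meet (.star (.var 0)) (.star (.var 1))
  | mid .a false => .star (.var 0)
  | mid .b false => .meet (.var 1) (.star (.var 1))
  | mid .c false => .join (.star (.var 0)) (.meet (.var 1) (.star (.var 1)))
  | mid .d false => .star (.var 1)
  | mid .u false => .join (.star (.var 0)) (.star (.var 1))

/-- The assignment sending variable `0` to `p` and all other variables to `q`. -/
def asg {X : Type} (p q : X) : ℕ → X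
  | 0 => p
  | _ + 1 => q

theorem rep_eval_asg (A : MSAlg) (v : ℕ → A.carrier) (x : MS14) :
    (rep x).eval A v = (rep x).eval A (asg (v 0) (v 1)) := by
  rcases x with _ | _ | ⟨_ | _ | _ | _ | _ | _, _ | _⟩ <;> rfl

theorem rep_eval_self (x : MS14) :
    (rep x).eval alg (asg (mid .a true) (mid .b true)) = x := by
  rcases x with _ | _ | ⟨_ | _ | _ | _ | _ | _, _ | _⟩ <;> rfl

/-! ### Homomorphisms into `MS` -/

/-- Six pairs `(p, q)` such that `(a, 1) ↦ p`, `(b, 1) ↦ q` extends to a homomorphism into `MS`. -/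
def Good (p q : MS6) : Prop :=
  (p, q) ∈ [(MS6.a, MS6.a), (.a, .b), (.a, .d), (.d, .a), (.d, .d), (.u, .u)]

/-- The map from `MS14` to `MS` that sends `(a, 1)` to `p` and `(b, 1)` to `q` and evaluates
representing terms accordingly. -/
def toMS (p q : MS6) (x : MS14) : MS6 := (rep x).eval MS6red (asg p q)

theorem good_hom {p q : MS6} (h : Good p q) : MSIsHom alg MS6red (toMS p q) := by
  simp only [Good, List.mem_cons, Prod.mk.injEq, List.not_mem_nil, or_false] at h
  rcases h with ⟨rfl, rfl⟩ | ⟨rfl, rfl⟩ | ⟨rfl, rfl⟩ | ⟨rfl, rfl⟩ | ⟨rfl, rfl⟩ | ⟨rfl, rfl⟩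
  all_goals
    refine ⟨?_, ?_, ?_, rfl, rfl⟩
    · rintro (_ | _ | ⟨_ | _ | _ | _ | _ | _, _ | _⟩) (_ | _ | ⟨_ | _ | _ | _ | _ | _, _ | _⟩) <;>
        rfl
    · rintro (_ | _ | ⟨_ | _ | _ | _ | _ | _, _ | _⟩) (_ | _ | ⟨_ | _ | _ | _ | _ | _, _ | _⟩) <;>
        rfl
    · rintro (_ | _ | ⟨_ | _ | _ | _ | _ | _, _ | _⟩) <;> rfl

/-- The homomorphisms into `MS` separate points: `(a, b)` gives the projection to `MS`, `(1, 1)`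
the projection to `2`, and `(d, d)` distinguishes `⊥` and `⊤` from the elements of `MS × 2`. -/
theorem sep {x y : MS14} (h : ∀ p q, Good p q → toMS p q x = toMS p q y) : x = y := by
  have h1 := h .a .b (by simp [Good])
  have h2 := h .d .d (by simp [Good])
  have h3 := h .u .u (by simp [Good])
  clear h
  revert x y
  decide

/-! ### Embedding into a free algebra -/

/-- The first of two terms generating a copy of `MS14` in the free algebra:
`p° ∧ (p°° ∨ q°)`, where `p = x₀ ∧ x₀°` and `q = x₁ ∧ x₁°`. -/
def genA : MSTerm ℕ :=
  .meet (.star (.meet (.var 0) (.star (.var 0))))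
    (.join (.star (.star (.meet (.var 0) (.star (.var 0)))))
      (.star (.meet (.var 1) (.star (.var 1)))))

/-- The second of two terms generating a copy of `MS14` in the free algebra:
`q ∨ (p° ∧ q°)`, where `p = x₀ ∧ x₀°` and `q = x₁ ∧ x₁°`. -/
def genB : MSTerm ℕ :=
  .join (.meet (.var 1) (.star (.var 1)))
    (.meet (.star (.meet (.var 0) (.star (.var 0))))
      (.star (.meet (.var 1) (.star (.var 1)))))

theorem gen_good (w : ℕ → MS6) : Good (genA.eval MS6red w) (genB.eval MS6red w) := by
  have key : ∀ x y : MS6, Good (genA.eval MS6red (asg x y)) (genB.eval MS6red (asg x y)) := by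
    rintro (_ | _ | _ | _ | _ | _) (_ | _ | _ | _ | _ | _) <;> unfold Good <;> decide
  exact key (w 0) (w 1)

theorem good_gen {p q : MS6} (h : Good p q) :
    ∃ w : ℕ → MS6, genA.eval MS6red w = p ∧ genB.eval MS6red w = q := by
  simp only [Good, List.mem_cons, Prod.mk.injEq, List.not_mem_nil, or_false] at h
  rcases h with ⟨rfl, rfl⟩ | ⟨rfl, rfl⟩ | ⟨rfl, rfl⟩ | ⟨rfl, rfl⟩ | ⟨rfl, rfl⟩ | ⟨rfl, rfl⟩
  · exact ⟨asg .a .a, rfl, rfl⟩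
  · exact ⟨asg .a .b, rfl, rfl⟩
  · exact ⟨asg .a .d, rfl, rfl⟩
  · exact ⟨asg .d .a, rfl, rfl⟩
  · exact ⟨asg .d .d, rfl, rfl⟩
  · exact ⟨asg .z .z, rfl, rfl⟩

/-- The term in the free algebra corresponding to an element of `MS14`. -/
def free (x : MS14) : MSTerm ℕ := (rep x).subst (asg genA genB)

theorem free_eval (w : ℕ → MS6) (x : MS14) :
    (free x).eval MS6red w = toMS (genA.eval MS6red w) (genB.eval MS6red w) x := by
  rw [free, MSTerm.eval_subst]
  exact rep_eval_asg MS6red _ x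

theorem subst_free_eval (v : ℕ → MS14) (w : ℕ → MS6) (t : MSTerm ℕ) :
    (t.subst fun i => free (v i)).eval MS6red w =
      toMS (genA.eval MS6red w) (genB.eval MS6red w) (t.eval alg v) := by
  rw [MSTerm.eval_subst, (good_hom (gen_good w)).map_eval]
  simp only [free_eval]

theorem admissible_iff (Γ : List (MSTerm ℕ × MSTerm ℕ)) (φ ψ : MSTerm ℕ) :
    MSAdmissible MS6alg Γ φ ψ ↔ MSQValid alg Γ φ ψ := by
  change MSAdmissible MS6red Γ φ ψ ↔ _
  constructor
  · intro hadm v hv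
    have h := hadm (fun i => free (v i)) fun p hp w => by
      rw [subst_free_eval, subst_free_eval, hv p hp]
    refine sep fun p q hpq => ?_
    obtain ⟨w, rfl, rfl⟩ := good_gen hpq
    have hw := h w
    rwa [subst_free_eval, subst_free_eval] at hw
  · intro hval σ hσ v
    have hg : Good .a .b := by simp [Good]
    have hsec : ∀ m : MS6, toMS .a .b (mid m true) = m := by
      rintro (_ | _ | _ | _ | _ | _) <;> rfl
    -- `v` lifts along the projection `MS14 → MS` to an assignment into `MS × {1}`.
    have hlift : ∀ t : MSTerm ℕ, t.eval MS6red v =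
        toMS .a .b (t.eval alg fun i => mid (v i) true) := fun t => by
      rw [(good_hom hg).map_eval]
      simp only [hsec]
    rw [hlift, hlift, MSTerm.eval_subst, MSTerm.eval_subst]
    refine congrArg _ (hval _ fun p hp => ?_)
    rw [← MSTerm.eval_subst, ← MSTerm.eval_subst]
    refine sep fun r s hrs => ?_
    rw [(good_hom hrs).map_eval, (good_hom hrs).map_eval]
    exact hσ p hp _

/-! ### The laws of MS-algebras -/

theorem isMSAlg_MS6 : IsMSAlg MS6red := by
  refine ⟨?_, ?_, ?_, ?_, ?_, ?_, ?_, ?_, ?_, ?_, ?_, rfl⟩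
  · rintro (_ | _ | _ | _ | _ | _) (_ | _ | _ | _ | _ | _) <;> rfl
  · rintro (_ | _ | _ | _ | _ | _) (_ | _ | _ | _ | _ | _) <;> rfl
  · rintro (_ | _ | _ | _ | _ | _) (_ | _ | _ | _ | _ | _) (_ | _ | _ | _ | _ | _) <;> rfl
  · rintro (_ | _ | _ | _ | _ | _) (_ | _ | _ | _ | _ | _) (_ | _ | _ | _ | _ | _) <;> rfl
  · rintro (_ | _ | _ | _ | _ | _) (_ | _ | _ | _ | _ | _) <;> rfl
  · rintro (_ | _ | _ | _ | _ | _) (_ | _ | _ | _ | _ | _) <;> rfl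
  · rintro (_ | _ | _ | _ | _ | _) (_ | _ | _ | _ | _ | _) (_ | _ | _ | _ | _ | _) <;> rfl
  · rintro (_ | _ | _ | _ | _ | _) <;> rfl
  · rintro (_ | _ | _ | _ | _ | _) <;> rfl
  · rintro (_ | _ | _ | _ | _ | _) <;> rfl
  · rintro (_ | _ | _ | _ | _ | _) (_ | _ | _ | _ | _ | _) <;> rfl

/-- The laws pass from `MS` to `MS14` along the separating homomorphisms. -/
theorem isMSAlg : IsMSAlg alg := by
  obtain ⟨h1, h2, h3, h4, h5, h6, h7, h8, h9, h10, h11, h12⟩ := isMSAlg_MS6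
  refine ⟨fun x y => sep fun p q hg => ?_, fun x y => sep fun p q hg => ?_,
    fun x y z => sep fun p q hg => ?_, fun x y z => sep fun p q hg => ?_,
    fun x y => sep fun p q hg => ?_, fun x y => sep fun p q hg => ?_,
    fun x y z => sep fun p q hg => ?_, fun x => sep fun p q hg => ?_,
    fun x => sep fun p q hg => ?_, fun x => sep fun p q hg => ?_,
    fun x y => sep fun p q hg => ?_, rfl⟩
  all_goals
    have H := good_hom hg
    simp only [H.map_meet, H.map_join, H.map_star, H.map_zero, H.map_one]
    apply_assumption

theorem card : Nat.card alg.carrier = 14 := by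
  change Nat.card MS14 = 14
  rw [Nat.card_eq_fintype_card]
  rfl

/-! ### Minimality -/

/-- The diagram of `MS14`, written in the two generators: the equations expressing that `rep`
induces a homomorphism. -/
def diagram : List (MSTerm ℕ × MSTerm ℕ) :=
  elems.flatMap fun x =>
    (rep (star x), .star (rep x)) ::
      elems.flatMap fun y =>
        [(rep (meet x y), .meet (rep x) (rep y)), (rep (join x y), .join (rep x) (rep y))]

/-- An assignment into `B` satisfying the diagram is a homomorphism from `MS14` to `B`. -/
theorem hom_of_diagram {B : MSAlg} {v : ℕ → B.carrier}
    (hv : ∀ p ∈ diagram, p.1.eval B v = p.2.eval B v) :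
    MSIsHom alg B fun x => (rep x).eval B v where
  map_meet x y := hv (rep (meet x y), .meet (rep x) (rep y)) <| by
    refine List.mem_flatMap.2 ⟨x, mem_elems x, List.mem_cons_of_mem _ ?_⟩
    exact List.mem_flatMap.2 ⟨y, mem_elems y, by simp⟩
  map_join x y := hv (rep (join x y), .join (rep x) (rep y)) <| by
    refine List.mem_flatMap.2 ⟨x, mem_elems x, List.mem_cons_of_mem _ ?_⟩
    exact List.mem_flatMap.2 ⟨y, mem_elems y, by simp⟩
  map_star x := hv (rep (star x), .star (rep x)) <|
    List.mem_flatMap.2 ⟨x, mem_elems x, List.mem_cons_self⟩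
  map_zero := rfl
  map_one := rfl

theorem diagram_self :
    ∀ p ∈ diagram, p.1.eval alg (asg (mid .a true) (mid .b true)) =
      p.2.eval alg (asg (mid .a true) (mid .b true)) := by
  intro p hp
  obtain ⟨x, -, hx⟩ := List.mem_flatMap.1 hp
  rcases List.mem_cons.1 hx with rfl | hx
  · exact (rep_eval_self _).trans (congrArg star (rep_eval_self x).symm)
  · obtain ⟨y, -, hy⟩ := List.mem_flatMap.1 hx
    simp only [List.mem_cons, List.not_mem_nil, or_false] at hy
    rcases hy with rfl | rfl
    · exact (rep_eval_self _).trans (congrArg₂ meet (rep_eval_self x).symm (rep_eval_self y).symm)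
    · exact (rep_eval_self _).trans (congrArg₂ join (rep_eval_self x).symm (rep_eval_self y).symm)

/-- A few relations between the generators `(a, 1)`, `(b, 1)` determine them, given that the second
is not of the form `z°°`. -/
theorem gen_unique : ∀ x y : MS14, star (star x) = x → meet x (star x) = star x →
    meet (star (star y)) (star y) = star y → join x (star y) = join x (star (star y)) →
    meet x y = meet x (star (star y)) →
    y ≠ star (star y) → x = mid .a true ∧ y = mid .b true := by
  decide

/-- An assignment into `MS14` that satisfies the diagram corresponds to an endomorphism; if it
distinguishes `(b, 1)` from `(d, 1)`, it is the identity. -/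
theorem endo_eq_id {v : ℕ → MS14}
    (hv : ∀ p ∈ diagram, p.1.eval alg v = p.2.eval alg v)
    (hne : (rep (mid .b true)).eval alg v ≠ (rep (mid .d true)).eval alg v) (x : MS14) :
    (rep x).eval alg v = x := by
  have H := hom_of_diagram hv
  obtain ⟨h0, h1⟩ := gen_unique (v 0) (v 1) (H.map_star (mid .a false)).symm
    (H.map_meet (mid .a true) (mid .a false)).symm
    (H.map_meet (mid .d true) (mid .d false)).symm
    (H.map_join (mid .a true) (mid .d false)).symm (H.map_meet (mid .a true) (mid .d true)) hne
  rw [rep_eval_asg]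
  have h : asg (v 0) (v 1) = asg (mid .a true) (mid .b true) := by rw [h0, h1]
  exact (congrArg (fun w => (rep x).eval alg w) h).trans (rep_eval_self x)

/-- A family of finite algebras axiomatizing admissibility has a member with at least 14
elements. -/
theorem exists_large (k : ℕ) (B : Fin k → MSAlg) (hfin : ∀ i, Finite (B i).carrier)
    (hB : ∀ (Γ : List (MSTerm ℕ × MSTerm ℕ)) (φ ψ : MSTerm ℕ),
      (∀ i, MSQValid (B i) Γ φ ψ) ↔ MSAdmissible MS6alg Γ φ ψ) :
    ∃ i, 14 ≤ Nat.card (B i).carrier := by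
  have hnot : ¬ ∀ i, MSQValid (B i) diagram (rep (mid .b true)) (rep (mid .d true)) := by
    rw [hB, admissible_iff]
    intro h
    have h' := h _ diagram_self
    rw [rep_eval_self, rep_eval_self] at h'
    exact absurd h' (by decide)
  obtain ⟨i, hi⟩ := not_forall.1 hnot
  refine ⟨i, ?_⟩
  have := hfin i
  simp only [MSQValid, not_forall] at hi
  obtain ⟨v, hv, hne⟩ := hi
  rw [← card]
  refine Nat.card_le_card_of_injective (fun x : MS14 => (rep x).eval (B i) v) fun r s hrs => ?_
  by_contra hrs'
  have hadm : MSAdmissible MS6alg ((rep r, rep s) :: diagram)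
      (rep (mid .b true)) (rep (mid .d true)) := by
    rw [admissible_iff]
    intro w hw
    by_contra hw'
    have hid := endo_eq_id (fun p hp => hw p (List.mem_cons_of_mem _ hp)) hw'
    have := hw _ List.mem_cons_self
    rw [hid, hid] at this
    exact hrs' this
  refine hne ((hB _ _ _).2 hadm i v fun p hp => ?_)
  rcases List.mem_cons.1 hp with rfl | hp
  · exact hrs
  · exact hv p hp

end MS14

theorem statement8 :
    (∃ A : MSAlg, Nat.card A.carrier = 14 ∧ IsMSAlg A ∧
      ∀ (Γ : List (MSTerm ℕ × MSTerm ℕ)) (φ ψ : MSTerm ℕ),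
        MSAdmissible MS6alg Γ φ ψ ↔ MSQValid A Γ φ ψ) ∧
    (∀ (k : ℕ) (B : Fin k → MSAlg),
      (∀ i, Finite (B i).carrier) →
      (∀ (Γ : List (MSTerm ℕ × MSTerm ℕ)) (φ ψ : MSTerm ℕ),
        (∀ i, MSQValid (B i) Γ φ ψ) ↔ MSAdmissible MS6alg Γ φ ψ) →
      MultisetLE ({14} : Multiset ℕ)
        (↑(List.ofFn fun i => Nat.card (B i).carrier))) := by
  refine ⟨⟨MS14.alg, MS14.card, MS14.isMSAlg, MS14.admissible_iff⟩, fun k B hfin hB x hx => ?_⟩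
  obtain ⟨i, hi⟩ := MS14.exists_large k B hfin hB
  have hx14 : x = 14 := by
    by_contra hne
    rw [Multiset.count_singleton, if_neg hne] at hx
    exact Nat.not_lt_zero _ hx
  subst hx14
  have hmem : Nat.card (B i).carrier ∈
      (↑(List.ofFn fun i => Nat.card (B i).carrier) : Multiset ℕ) :=
    Multiset.mem_coe.2 (List.mem_ofFn.2 ⟨i, rfl⟩)
  have hpos := Multiset.count_pos.2 hmem
  have hne : Nat.card (B i).carrier ≠ 14 := fun h => by
    rw [h] at hpos
    rw [Multiset.count_singleton_self] at hx
    omega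
  refine ⟨Nat.card (B i).carrier, by omega, ?_⟩
  rwa [Multiset.count_singleton, if_neg hne]
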